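/- For every positive integer d there are, up to group isomorphism, only finitely many groups G having a normal subgroup T such that T is isomorphic to the free abelian group ℤ^d, the quotient G/T is finite, and the centralizer of T in G equals T (so that the finite point group G/T acts faithfully on T by conjugation). -/

import Mathlib

/-!
Let a finite group `P` act on a `ℚ`-vector space `V` of dimension `d`, preserving a lattice `L`.
There is a `P`-invariant norm `q` with `1 ≤ q` on `L \ {0}` for which the lattice vectors of length
`1` span `V`. Indeed, if their span `W` is proper, let `π` be an equivariant projection onto `W` and
`r` an invariant seminorm, integral on `L`, with kernel `W`. If `x₀` minimizes `r` among the `x ∈ L`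
outside `W` with `q (π x) ≤ 1`, then `max (q (π x)) (r x / r x₀)` is again such a norm; it agrees
with `q` on `W` and has `x₀` as a further vector of length `1`.

There are finitely many vectors of length `1`, as they are distinct modulo `3L`. Choose a basis of
`V` among them with determinant of largest absolute value. By Cramer's rule every other such vector,
hence every image of a basis vector under `P`, has coordinates in `[-1, 1]`. Every coset in `L` of
the span of the basis has a representative of length at most `d`, and such vectors are distinct
modulo `(2d + 1)L`, so the span has index at most `(2d + 1) ^ d`. Hence the matrices of `P` belong
to a finite set that depends only on `d`.

For a space group `G`, averaging a cocycle over the point group extends the action of `T` on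
`ℚ ⊗ T` by translations to a faithful affine action of `G` whose translation parts have bounded
denominators. In the basis above `G` contains the translations by `ℤ^d`, and its cosets modulo these
are represented in a finite set that depends only on `d`.
-/

open Submodule
open scoped Pointwise TensorProduct

namespace Bieberbach

theorem exists_isMinOn_of_natCast {α : Type*} {f : α → ℝ} {s : Set α} (hs : s.Nonempty)
    (hf : ∀ x ∈ s, ∃ n : ℕ, f x = n) : ∃ x ∈ s, IsMinOn f s x := by
  obtain ⟨x, hx, hmin⟩ := exists_minimalFor_of_wellFoundedLT (· ∈ s) (fun x => ⌊f x⌋₊) hs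
  refine ⟨x, hx, isMinOn_iff.mpr fun y hy => ?_⟩
  obtain ⟨m, hm⟩ := hf x hx
  obtain ⟨n, hn⟩ := hf y hy
  have hle := le_of_not_gt fun hlt => (hmin hy hlt.le).not_gt hlt
  simp only [hm, hn, Nat.floor_natCast] at hle ⊢
  exact_mod_cast hle

theorem exists_basis_mem_abs_repr_le_one {K V ι : Type*} [Field K] [LinearOrder K]
    [IsStrictOrderedRing K] [AddCommGroup V] [Module K V] [Finite ι] (e : Module.Basis ι K V)
    {S : Set V} (hS : S.Finite) (hspan : span K S = ⊤) :
    ∃ v : Module.Basis ι K V, (∀ i, v i ∈ S) ∧ ∀ x ∈ S, ∀ i, |v.repr x i| ≤ 1 := by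
  classical
  have := Fintype.ofFinite ι
  have := hS.to_subtype
  obtain ⟨v₀, hv₀⟩ : ∃ v : Module.Basis ι K V, ∀ i, v i ∈ S := by
    obtain ⟨b, hbS, hb, hli⟩ := exists_linearIndependent K S
    let B := Module.Basis.mk hli (by rw [Subtype.range_coe, hb, hspan])
    exact ⟨B.reindex (B.indexEquiv e), fun i => by simpa [B] using hbS (Subtype.prop _)⟩
  have : Nonempty (ι → S) := ⟨fun i => ⟨v₀ i, hv₀ i⟩⟩
  let det : (ι → S) → K := fun w => e.det fun i => (w i : V)
  obtain ⟨w, hw⟩ := Finite.exists_max fun w => |det w|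
  have hpos : 0 < |det w| :=
    (abs_pos.mpr (e.isUnit_det v₀).ne_zero).trans_le (hw fun i => ⟨v₀ i, hv₀ i⟩)
  obtain ⟨hli, hsp⟩ := e.is_basis_iff_det.mpr (isUnit_iff_ne_zero.mpr (abs_pos.mp hpos))
  refine ⟨Module.Basis.mk hli hsp.ge, fun i => by simp, fun x hx i => ?_⟩
  have hupdate : (fun j => (Function.update w i ⟨x, hx⟩ j : V)) =
      Function.update (fun j => (w j : V)) i x :=
    funext fun j => Function.apply_update (fun _ (y : S) => (y : V)) w i ⟨x, hx⟩ j
  have hcramer : det w * (Module.Basis.mk hli hsp.ge).repr x i =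
      det (Function.update w i ⟨x, hx⟩) := by
    simp only [det, hupdate]
    exact LinearMap.congr_fun (e.det_smul_mk_coord_eq_det_update hli hsp.ge i) x
  have hle := hw (Function.update w i ⟨x, hx⟩)
  rwa [← hcramer, abs_mul, mul_le_iff_le_one_right hpos] at hle

section Lattice

variable {V : Type*} [AddCommGroup V] [Module ℚ V]

theorem exists_nsmul_mem_of_mem_span {L : Submodule ℤ V} {x : V} (hx : x ∈ span ℚ (L : Set V)) :
    ∃ n : ℕ, n ≠ 0 ∧ n • x ∈ L := by
  induction hx using span_induction with
  | mem x hx => exact ⟨1, one_ne_zero, by simpa using hx⟩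
  | zero => exact ⟨1, one_ne_zero, by simp⟩
  | add x y _ _ hx hy =>
    obtain ⟨m, hm, hmx⟩ := hx
    obtain ⟨n, hn, hny⟩ := hy
    refine ⟨m * n, mul_ne_zero hm hn, ?_⟩
    rw [smul_add, mul_smul m n y, mul_comm m n, mul_smul]
    exact add_mem (nsmul_mem hmx n) (nsmul_mem hny m)
  | smul a x _ hx =>
    obtain ⟨n, hn, hnx⟩ := hx
    refine ⟨n * a.den, mul_ne_zero hn a.den_nz, ?_⟩
    have : (n * a.den) • a • x = a.num • n • x := by
      rw [mul_smul, ← Nat.cast_smul_eq_nsmul ℚ a.den, smul_smul, Rat.den_mul_eq_num,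
        Int.cast_smul_eq_zsmul, smul_comm]
    exact this ▸ L.smul_mem _ hnx

theorem exists_nsmul_mem_of_fg {L M : Submodule ℤ V} (hM : M.FG)
    (h : ∀ x ∈ M, x ∈ span ℚ (L : Set V)) : ∃ n : ℕ, n ≠ 0 ∧ ∀ x ∈ M, n • x ∈ L := by
  induction M, hM using fg_induction with
  | singleton x =>
    obtain ⟨n, hn, hnx⟩ := exists_nsmul_mem_of_mem_span (h x (mem_span_singleton_self x))
    refine ⟨n, hn, fun y hy => ?_⟩
    obtain ⟨a, rfl⟩ := mem_span_singleton.mp hy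
    exact smul_comm n a x ▸ L.smul_mem a hnx
  | sup M₁ M₂ _ _ h₁ h₂ =>
    obtain ⟨m, hm, hmM⟩ := h₁ fun x hx => h x (mem_sup_left hx)
    obtain ⟨n, hn, hnM⟩ := h₂ fun x hx => h x (mem_sup_right hx)
    refine ⟨m * n, mul_ne_zero hm hn, fun x hx => ?_⟩
    obtain ⟨y, hy, z, hz, rfl⟩ := mem_sup.mp hx
    rw [smul_add, mul_smul m n z, mul_comm m n, mul_smul]
    exact add_mem (nsmul_mem (hmM y hy) n) (nsmul_mem (hnM z hz) m)

end Lattice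

section Projection

variable {k P V : Type*} [Field k] [Group P] [Finite P] [NeZero (Nat.card P : k)]
  [AddCommGroup V] [Module k V] {σ : Representation k P V}

theorem exists_equivariant_isProj (W : Subrepresentation σ) :
    ∃ π : Module.End k V, LinearMap.IsProj W.toSubmodule π ∧ ∀ p, Commute π (σ p) := by
  obtain ⟨U, hWU⟩ := exists_isCompl W
  have h : IsCompl W.toSubmodule U.toSubmodule :=
    ⟨disjoint_iff.mpr (congrArg Subrepresentation.toSubmodule hWU.inf_eq_bot),
      codisjoint_iff.mpr (congrArg Subrepresentation.toSubmodule hWU.sup_eq_top)⟩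
  refine ⟨projection _ _ h, ⟨projection_apply_mem h, fun x => projection_apply_of_mem_left h⟩,
    fun p => ?_⟩
  rw [LinearMap.IsIdempotentElem.commute_iff (isIdempotentElem_projection h), range_projection,
    ker_projection]
  exact ⟨W.apply_mem_toSubmodule p, U.apply_mem_toSubmodule p⟩

end Projection

section LatticeNorm

variable {P V : Type*} [Group P] [AddCommGroup V] [Module ℚ V]
  {σ : Representation ℚ P V} {L : Submodule ℤ V} {q : Seminorm ℚ V}

theorem seminorm_sum_apply {ι : Type*} (s : Finset ι) (q : ι → Seminorm ℚ V) (x : V) :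
    (∑ i ∈ s, q i) x = ∑ i ∈ s, q i x := by
  rw [← Finset.sum_apply x s fun i => ⇑(q i)]
  exact congrFun (map_sum (FunLike.coeAddMonoidHom (Seminorm ℚ V) V ℝ) q s) x

theorem exists_norm_natCast (L : Submodule ℤ V) [IsLattice ℚ L] :
    ∃ s : Seminorm ℚ V, (∀ x ∈ L, ∃ n : ℕ, s x = n) ∧ ∀ x, s x = 0 ↔ x = 0 := by
  let c := Module.Free.chooseBasis ℤ L
  let b := c.extendOfIsLattice ℚ
  have hspan : span ℤ (Set.range b) = L := by
    have hb : Set.range b = L.subtype '' Set.range c := by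
      rw [← Set.range_comp]
      exact congrArg Set.range (funext (c.extendOfIsLattice_apply ℚ))
    rw [hb, span_image, c.span_eq, map_subtype_top]
  let s : Seminorm ℚ V := ∑ i, (normSeminorm ℚ ℚ).comp (b.coord i)
  have hs : ∀ x, s x = ∑ i, ‖b.repr x i‖ := seminorm_sum_apply _ _
  refine ⟨s, fun x hx => ?_, fun x => ?_⟩
  · rw [← hspan, b.mem_span_iff_repr_mem ℤ] at hx
    choose m hm using hx
    refine ⟨∑ i, (m i).natAbs, ?_⟩
    simp only [hs, ← hm, eq_intCast, Int.norm_cast_rat, Int.norm_eq_abs, Nat.cast_sum,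
      Nat.cast_natAbs, Int.cast_abs]
  · rw [hs, Finset.sum_eq_zero_iff_of_nonneg fun _ _ => norm_nonneg _]
    simp only [Finset.mem_univ, true_imp_iff, norm_eq_zero, ← b.coord_apply,
      b.forall_coord_eq_zero_iff]

theorem exists_invariant_seminorm_natCast [Finite P] [IsLattice ℚ L]
    (hσ : ∀ p, ∀ x ∈ L, σ p x ∈ L) {f : Module.End ℚ V} (hf : ∀ p, Commute f (σ p)) :
    ∃ s : Seminorm ℚ V, (∀ p x, s (σ p x) = s x) ∧ (∀ x ∈ L, ∃ n : ℕ, s x = n) ∧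
      ∀ x, s x = 0 ↔ f x = 0 := by
  have := Fintype.ofFinite P
  have hfg : L.FG := IsLattice.fg (A := ℚ)
  have hspan : span ℚ (L : Set V) = ⊤ := IsLattice.span_eq_top
  obtain ⟨s, hsL, hs0⟩ := exists_norm_natCast L
  obtain ⟨n, hn, hnL⟩ := exists_nsmul_mem_of_fg (hfg.map (f.restrictScalars ℤ))
    fun _ _ => hspan.ge mem_top
  let r : Seminorm ℚ V := ∑ p, s.comp (n • (f * σ p))
  have hr : ∀ x, r x = ∑ p, s (n • f (σ p x)) := seminorm_sum_apply _ _
  refine ⟨r, fun p x => ?_, fun x hx => ?_, fun x => ?_⟩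
  · rw [hr, hr]
    exact Fintype.sum_equiv (Equiv.mulRight p) _ _ fun p' => by simp
  · choose m hm using fun p => hsL _ (hnL _ (mem_map_of_mem (hσ p x hx)))
    exact ⟨∑ p, m p, by rw [hr, Nat.cast_sum]; exact Finset.sum_congr rfl fun p _ => hm p⟩
  · have hfσ : ∀ p, f (σ p x) = σ p (f x) := fun p => LinearMap.congr_fun (hf p) x
    have hn0 : ∀ y : V, n • y = 0 ↔ y = 0 := fun y => by
      rw [← Nat.cast_smul_eq_nsmul ℚ, smul_eq_zero_iff_right (Nat.cast_ne_zero.mpr hn)]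
    rw [hr, Finset.sum_eq_zero_iff_of_nonneg fun _ _ => apply_nonneg s _]
    simp only [hs0, hn0, hfσ, Finset.mem_univ, true_imp_iff]
    exact ⟨fun h => by simpa using h 1, fun h p => by rw [h, map_zero]⟩

/-- `q` is a `P`-invariant seminorm which is at least `1` on all nonzero vectors of `L`. -/
structure IsLatticeNorm (σ : Representation ℚ P V) (L : Submodule ℤ V) (q : Seminorm ℚ V) :
    Prop where
  map_apply : ∀ p x, q (σ p x) = q x
  one_le : ∀ x ∈ L, x ≠ 0 → 1 ≤ q x

/-- The vectors of `L` in the closed unit ball of `q`. If `q` is a lattice norm, these are `0` and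
the minimal vectors of length `1`. -/
def shortVectors (L : Submodule ℤ V) (q : Seminorm ℚ V) : Set V := {x | x ∈ L ∧ q x ≤ 1}

theorem exists_isLatticeNorm [Finite P] [IsLattice ℚ L] (hσ : ∀ p, ∀ x ∈ L, σ p x ∈ L) :
    ∃ q, IsLatticeNorm σ L q := by
  obtain ⟨q, hqσ, hqL, hq0⟩ := exists_invariant_seminorm_natCast hσ fun p => Commute.one_left (σ p)
  refine ⟨q, hqσ, fun x hx hx0 => ?_⟩
  obtain ⟨n, hn⟩ := hqL x hx
  have hn0 : n ≠ 0 := fun h => hx0 ((hq0 x).mp (by rw [hn, h, Nat.cast_zero]))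
  exact hn ▸ Nat.one_le_cast.mpr (Nat.one_le_iff_ne_zero.mpr hn0)

theorem exists_minimal_vector [IsLattice ℚ L] {W : Submodule ℚ V} {π : Module.End ℚ V} (hW : W ≠ ⊤)
    (hπ : LinearMap.IsProj W π) {r : Seminorm ℚ V} (hr : ∀ x ∈ L, ∃ n : ℕ, r x = n)
    (q : Seminorm ℚ V) :
    ∃ x ∈ {x | x ∈ L ∧ x ∉ W ∧ q (π x) ≤ 1}, IsMinOn r {x | x ∈ L ∧ x ∉ W ∧ q (π x) ≤ 1} x := by
  refine exists_isMinOn_of_natCast ?_ fun x hx => hr x hx.1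
  obtain ⟨x, hx⟩ : ∃ x, x ∉ W := by simpa [eq_top_iff'] using hW
  obtain ⟨n, hn, hnx⟩ := exists_nsmul_mem_of_mem_span (L := L) (x := x - π x)
    (IsLattice.span_eq_top.ge mem_top)
  refine ⟨n • (x - π x), hnx, fun h => hx ?_, ?_⟩
  · rw [← Nat.cast_smul_eq_nsmul ℚ, W.smul_mem_iff (Nat.cast_ne_zero.mpr hn)] at h
    simpa using W.add_mem h (hπ.map_mem x)
  · rw [map_nsmul, map_sub, hπ.map_id _ (hπ.map_mem x), sub_self, smul_zero, map_zero]
    exact zero_le_one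

namespace IsLatticeNorm

theorem apply_mem_span_shortVectors (hq : IsLatticeNorm σ L q) (hσ : ∀ p, ∀ x ∈ L, σ p x ∈ L)
    (p : P) {x : V} (hx : x ∈ span ℚ (shortVectors L q)) :
    σ p x ∈ span ℚ (shortVectors L q) := by
  have hmap : (span ℚ (shortVectors L q)).map (σ p) ≤ span ℚ (shortVectors L q) := by
    rw [map_span]
    refine span_mono ?_
    rintro _ ⟨y, ⟨hyL, hyq⟩, rfl⟩
    exact ⟨hσ p y hyL, (hq.map_apply p y).trans_le hyq⟩
  exact hmap (mem_map_of_mem hx)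

theorem exists_span_shortVectors_lt [Finite P] [IsLattice ℚ L] (hq : IsLatticeNorm σ L q)
    (hσ : ∀ p, ∀ x ∈ L, σ p x ∈ L) (h : span ℚ (shortVectors L q) ≠ ⊤) :
    ∃ q', IsLatticeNorm σ L q' ∧ span ℚ (shortVectors L q) < span ℚ (shortVectors L q') := by
  obtain ⟨π, hπ, hπσ⟩ := exists_equivariant_isProj (σ := σ)
    ⟨span ℚ (shortVectors L q), fun p _ => hq.apply_mem_span_shortVectors hσ p⟩
  obtain ⟨r, hrσ, hrL, hr0⟩ := exists_invariant_seminorm_natCast (f := 1 - π) hσ fun p =>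
    (Commute.one_left _).sub_left (hπσ p)
  obtain ⟨x₀, ⟨hx₀L, hx₀W, hx₀q⟩, hmin⟩ := exists_minimal_vector h hπ hrL q
  set W := span ℚ (shortVectors L q)
  have hr0W : ∀ x, r x = 0 ↔ x ∈ W := fun x => by
    rw [hr0, LinearMap.sub_apply, Module.End.one_apply, sub_eq_zero, eq_comm]
    exact hπ.mem_iff_map_id.symm
  have hpos : 0 < r x₀ := (apply_nonneg r x₀).lt_of_ne' (mt (hr0W x₀).mp hx₀W)
  let q' : Seminorm ℚ V := q.comp π ⊔ (r x₀).toNNReal⁻¹ • r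
  have hq' : ∀ x, q' x = max (q (π x)) (r x / r x₀) := fun x => by
    rw [div_eq_inv_mul, ← Real.coe_toNNReal (r x₀) hpos.le]; rfl
  have hq'W : ∀ x ∈ W, q' x = q x := fun x hx => by
    rw [hq', (hr0W x).mpr hx, zero_div, hπ.map_id x hx, max_eq_left (apply_nonneg q x)]
  have hlt : W < span ℚ (shortVectors L q') := by
    refine SetLike.lt_iff_le_and_exists.mpr ⟨span_mono fun x hx => ⟨hx.1, ?_⟩, x₀, ?_, hx₀W⟩
    · exact (hq'W x (subset_span hx)).trans_le hx.2
    · exact subset_span ⟨hx₀L, by rw [hq', div_self hpos.ne']; exact max_le hx₀q le_rfl⟩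
  refine ⟨q', ⟨fun p x => ?_, fun x hxL hx0 => ?_⟩, hlt⟩
  · rw [hq', hq', hrσ, show π (σ p x) = σ p (π x) from LinearMap.congr_fun (hπσ p) x, hq.map_apply]
  · by_cases hxW : x ∈ W
    · exact (hq'W x hxW).symm ▸ hq.one_le x hxL hx0
    rw [hq']
    rcases le_total (q (π x)) 1 with hx | hx
    · exact le_max_of_le_right ((one_le_div hpos).mpr (hmin ⟨hxL, hxW, hx⟩))
    · exact le_max_of_le_left hx

end IsLatticeNorm

theorem exists_isLatticeNorm_span_shortVectors_eq_top [Finite P] [IsLattice ℚ L]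
    (hσ : ∀ p, ∀ x ∈ L, σ p x ∈ L) :
    ∃ q, IsLatticeNorm σ L q ∧ span ℚ (shortVectors L q) = ⊤ := by
  have : Module.Finite ℚ V := .of_basis ((Module.Free.chooseBasis ℤ L).extendOfIsLattice ℚ)
  obtain ⟨q, hq, hmax⟩ := exists_maximalFor_of_wellFoundedGT (IsLatticeNorm σ L)
    (fun q => span ℚ (shortVectors L q)) (exists_isLatticeNorm hσ)
  refine ⟨q, hq, by_contra fun h => ?_⟩
  obtain ⟨q', hq', hlt⟩ := hq.exists_span_shortVectors_lt hσ h
  exact (hmax hq' hlt.le).not_gt hlt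

theorem eq_of_mkQ_eq (hq : ∀ x ∈ L, x ≠ 0 → 1 ≤ q x) {N : ℕ} {x y : L}
    (hxy : ModN.mkQ N x = ModN.mkQ N y) (hN : q x + q y < N) : x = y := by
  obtain ⟨z, hz⟩ := (Submodule.Quotient.eq _).mp hxy
  have hz' : (N : ℚ) • (z : V) = x - y := by
    rw [Nat.cast_smul_eq_nsmul, ← natCast_zsmul]
    exact congrArg Subtype.val hz
  have hlt : N * q z < N := calc
    N * q z = q ((N : ℚ) • (z : V)) := by
      rw [map_smul_eq_mul, ← Rat.norm_cast_real, Rat.cast_natCast, Real.norm_natCast]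
    _ = q (x - y) := by rw [hz']
    _ ≤ q x + q y := map_sub_le_add q _ _
    _ < N := hN
  have hz0 : (z : V) = 0 := by_contra fun h =>
    hlt.not_ge (le_mul_of_one_le_right N.cast_nonneg (hq z z.2 h))
  rw [hz0, smul_zero] at hz'
  exact Subtype.ext (sub_eq_zero.mp hz'.symm)

theorem finite_shortVectors [IsLattice ℚ L] (hq : ∀ x ∈ L, x ≠ 0 → 1 ≤ q x) :
    (shortVectors L q).Finite := by
  have hinj : Function.Injective
      fun x : shortVectors L q => ModN.mkQ 3 (⟨x, x.2.1⟩ : L) := fun x y hxy => by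
    have h := eq_of_mkQ_eq hq hxy (by push_cast; linarith [x.2.2, y.2.2])
    exact Subtype.ext (Subtype.mk.inj h)
  exact Finite.of_injective _ hinj

theorem exists_mem_span_seminorm_sub_le {ι : Type*} [Fintype ι] (v : Module.Basis ι ℚ V)
    (hv : ∀ i, q (v i) ≤ 1) (x : V) :
    ∃ y ∈ span ℤ (Set.range v), q (x - y) ≤ Fintype.card ι := by
  refine ⟨∑ i, ⌊v.repr x i⌋ • v i,
    sum_mem fun i _ => smul_mem _ _ (subset_span (Set.mem_range_self i)), ?_⟩
  have hx : x - ∑ i, ⌊v.repr x i⌋ • v i = ∑ i, Int.fract (v.repr x i) • v i := by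
    simp only [Int.fract, sub_smul, Finset.sum_sub_distrib, v.sum_repr, Int.cast_smul_eq_zsmul]
  calc q (x - ∑ i, ⌊v.repr x i⌋ • v i)
      ≤ ∑ i, q (Int.fract (v.repr x i) • v i) := by
        rw [hx]
        exact Finset.le_sum_of_subadditive q (map_zero q).le (map_add_le_add q) _ _
    _ ≤ ∑ _i : ι, 1 := Finset.sum_le_sum fun i _ => by
        rw [map_smul_eq_mul]
        refine mul_le_one₀ ?_ (apply_nonneg q _) (hv i)
        rw [← Rat.norm_cast_real, Real.norm_of_nonneg (mod_cast Int.fract_nonneg _)]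
        exact_mod_cast (Int.fract_lt_one _).le
    _ = Fintype.card ι := by simp

theorem factorial_smul_mem_span [IsLattice ℚ L] (hq : ∀ x ∈ L, x ≠ 0 → 1 ≤ q x)
    {ι : Type*} [Fintype ι] (v : Module.Basis ι ℚ V) (hvL : ∀ i, v i ∈ L) (hv : ∀ i, q (v i) ≤ 1)
    {x : V} (hx : x ∈ L) :
    ((2 * Fintype.card ι + 1) ^ Fintype.card ι).factorial • x ∈ span ℤ (Set.range v) := by
  let M := (span ℤ (Set.range v)).submoduleOf L
  set d := Fintype.card ι
  have hrep : ∀ c : L ⧸ M, ∃ y : L, M.mkQ y = c ∧ q y ≤ d := fun c => by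
    obtain ⟨y, rfl⟩ := M.mkQ_surjective c
    obtain ⟨z, hz, hyz⟩ := exists_mem_span_seminorm_sub_le v hv (y : V)
    have hzL : z ∈ L := span_le.mpr (Set.range_subset_iff.mpr hvL) hz
    refine ⟨y - ⟨z, hzL⟩, ?_, hyz⟩
    rw [map_sub, sub_eq_self]
    exact (Submodule.Quotient.mk_eq_zero M).mpr hz
  choose r hr hrq using hrep
  have hinj : Function.Injective fun c => ModN.mkQ (2 * d + 1) (r c) := fun c c' h => by
    have hcc' := eq_of_mkQ_eq hq h (by push_cast; linarith [hrq c, hrq c'])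
    rw [← hr c, hcc', hr]
  have hfinite : Finite (L ⧸ M) := Finite.of_injective _ hinj
  have hrank : Module.finrank ℤ L = d :=
    (congrArg Cardinal.toNat (IsLattice.rank' ℚ L)).trans (Module.finrank_eq_card_basis v)
  have hcard : Nat.card (L ⧸ M) ≤ (2 * d + 1) ^ d := by
    simpa only [ModN.natCard_eq, hrank] using Nat.card_le_card_of_injective _ hinj
  obtain ⟨n, hn⟩ := Nat.dvd_factorial Nat.card_pos hcard
  have hzero : M.mkQ (Nat.card (L ⧸ M) • ⟨x, hx⟩) = 0 := by rw [map_nsmul, card_nsmul_eq_zero']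
  have hmem : Nat.card (L ⧸ M) • x ∈ span ℤ (Set.range v) :=
    (Submodule.Quotient.mk_eq_zero M).mp hzero
  rw [hn, mul_comm, mul_smul]
  exact nsmul_mem hmem n

theorem exists_basis_abs_repr_le_one [Finite P] [IsLattice ℚ L] (hσ : ∀ p, ∀ x ∈ L, σ p x ∈ L)
    {ι : Type*} [Fintype ι] (e : Module.Basis ι ℚ V) :
    ∃ v : Module.Basis ι ℚ V, (∀ i, v i ∈ L) ∧
      (∀ x ∈ L, ((2 * Fintype.card ι + 1) ^ Fintype.card ι).factorial • x ∈
        span ℤ (Set.range v)) ∧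
      ∀ p i j, |v.repr (σ p (v i)) j| ≤ 1 := by
  obtain ⟨q, hq, hspan⟩ := exists_isLatticeNorm_span_shortVectors_eq_top hσ
  obtain ⟨v, hvS, hv⟩ :=
    exists_basis_mem_abs_repr_le_one e (finite_shortVectors hq.one_le) hspan
  refine ⟨v, fun i => (hvS i).1, fun x hx => ?_, fun p i => hv _ ⟨?_, ?_⟩⟩
  · exact factorial_smul_mem_span hq.one_le v (fun i => (hvS i).1) (fun i => (hvS i).2) hx
  · exact hσ p _ (hvS i).1
  · exact (hq.map_apply p _).trans_le (hvS i).2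

end LatticeNorm

section TranslationRep

variable {G V V' : Type*} [Group G] {T : Subgroup G} [T.Normal] [AddCommGroup V] [Module ℚ V]
  [AddCommGroup V'] [Module ℚ V']

theorem conjNormal_eq_one_of_mem [IsMulCommutative T] {g : G} (hg : g ∈ T) :
    (MulAut.conjNormal g : MulAut T) = 1 := by
  ext t
  rw [MulAut.conjNormal_apply, setLike_mul_comm hg t.2, mul_inv_cancel_right,
    MulAut.one_apply]

/-- A realization of the translation group `T` by vectors of a rational space `V`, together with a
representation of the point group `G ⧸ T` on `V` that induces conjugation on `T`. -/
structure TranslationRep (T : Subgroup G) [T.Normal] (V : Type*) [AddCommGroup V]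
    [Module ℚ V] where
  toVector : Additive T →+ V
  rep : Representation ℚ (G ⧸ T) V
  rep_toVector : ∀ (g : G) (t : T),
    rep g (toVector (.ofMul t)) = toVector (.ofMul (MulAut.conjNormal g t))

namespace TranslationRep

/-- The lattice of translation vectors. -/
def lattice (E : TranslationRep T V) : Submodule ℤ V := AddSubgroup.toIntSubmodule E.toVector.range

theorem mem_lattice {E : TranslationRep T V} {x : V} :
    x ∈ E.lattice ↔ ∃ t : T, E.toVector (.ofMul t) = x := Iff.rfl

theorem rep_mem_lattice (E : TranslationRep T V) (p : G ⧸ T) {x : V} (hx : x ∈ E.lattice) :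
    E.rep p x ∈ E.lattice := by
  obtain ⟨g, rfl⟩ := QuotientGroup.mk_surjective p
  obtain ⟨t, rfl⟩ := mem_lattice.mp hx
  exact mem_lattice.mpr ⟨_, (E.rep_toVector g t).symm⟩

/-- Transport of a realization along a linear change of coordinates. -/
def map (E : TranslationRep T V) (c : V ≃ₗ[ℚ] V') : TranslationRep T V' where
  toVector := c.toAddEquiv.toAddMonoidHom.comp E.toVector
  rep := c.conjRingEquiv.toMonoidHom.comp E.rep
  rep_toVector g t := by simp [E.rep_toVector]

/-- The crossed homomorphism is the average over the point group of the cocycle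
`τ g p = g * s p * (s (g * p))⁻¹` attached to a section `s` of `G → G ⧸ T`. -/
theorem exists_crossedHom [Finite (G ⧸ T)] (E : TranslationRep T V) :
    ∃ b : G → V, (∀ g h, b (g * h) = b g + E.rep g (b h)) ∧
      (∀ t : T, b t = E.toVector (.ofMul t)) ∧ ∀ g, Nat.card (G ⧸ T) • b g ∈ E.lattice := by
  have := Fintype.ofFinite (G ⧸ T)
  let s : G ⧸ T → G := Quotient.out
  have hs : ∀ p, (s p : G ⧸ T) = p := QuotientGroup.out_eq'
  have hmem : ∀ (g : G) (p : G ⧸ T), g * s p * (s (g * p))⁻¹ ∈ T := fun g p => by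
    rw [← QuotientGroup.eq_one_iff]
    simp [hs]
  let τ : G → G ⧸ T → T := fun g p => ⟨_, hmem g p⟩
  have hτ : ∀ g h p, τ (g * h) p = MulAut.conjNormal g (τ h p) * τ g (h * p) := fun g h p => by
    apply Subtype.ext
    simp [τ, mul_assoc]
  have hτT : ∀ (t : T) p, τ t p = t := fun t p => by
    have ht : ((t : G) : G ⧸ T) = 1 := (QuotientGroup.eq_one_iff _).mpr t.2
    apply Subtype.ext
    simp [τ, ht]
  let n : ℚ := Nat.card (G ⧸ T)
  have hn : n ≠ 0 := Nat.cast_ne_zero.mpr Nat.card_pos.ne'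
  refine ⟨fun g => n⁻¹ • ∑ p, E.toVector (.ofMul (τ g p)), fun g h => ?_, fun t => ?_, fun g => ?_⟩
  · simp only [hτ, ofMul_mul, map_add, Finset.sum_add_distrib, map_smul, map_sum,
      ← E.rep_toVector, smul_add]
    rw [add_comm]
    congr 2
    exact Fintype.sum_equiv (Equiv.mulLeft (h : G ⧸ T)) _ _ fun p => rfl
  · simp only [hτT, Finset.sum_const, Finset.card_univ, ← Nat.card_eq_fintype_card]
    rw [← Nat.cast_smul_eq_nsmul ℚ, inv_smul_smul₀ hn]
  · rw [← Nat.cast_smul_eq_nsmul ℚ, smul_inv_smul₀ hn]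
    exact sum_mem fun p _ => mem_lattice.mpr ⟨_, rfl⟩

/-- `φ` is an action of `G` by affine maps with linear part `E.rep` in which `T` acts by the
translations `E.toVector`. The last field bounds the denominators of the remaining translation
parts. -/
structure IsAffineExtension (E : TranslationRep T V) (φ : G →* (V ≃ᵃ[ℚ] V)) : Prop where
  linear_eq : ∀ g : G, ((φ g).linear : V →ₗ[ℚ] V) = E.rep g
  apply_coe : ∀ t : T, φ t = AffineEquiv.constVAdd ℚ V (E.toVector (.ofMul t))
  card_smul_mem : ∀ g, Nat.card (G ⧸ T) • φ g 0 ∈ E.lattice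

theorem exists_isAffineExtension [Finite (G ⧸ T)] (E : TranslationRep T V) :
    ∃ φ, E.IsAffineExtension φ := by
  obtain ⟨b, hb, hbT, hbL⟩ := E.exists_crossedHom
  have hb1 : b 1 = 0 := by simpa using hb 1 1
  let f : G →* (V →ᵃ[ℚ] V) :=
    { toFun := fun g => (E.rep g).toAffineMap + AffineMap.const ℚ V (b g)
      map_one' := by ext; simp [hb1]
      map_mul' := fun g h => by
        ext x
        change E.rep (g * h : G) x + b (g * h) = E.rep g (E.rep h x + b h) + b g
        rw [QuotientGroup.mk_mul, map_mul, Module.End.mul_apply, map_add, hb]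
        abel }
  let φ : G →* (V ≃ᵃ[ℚ] V) := AffineEquiv.equivUnitsAffineMap.symm.toMonoidHom.comp f.toHomUnits
  have hφ : ∀ g x, φ g x = E.rep g x + b g := fun _ _ => rfl
  refine ⟨φ, fun g => ?_, fun t => ?_, fun g => ?_⟩
  · exact (AffineMap.add_linear _ _).trans (by simp)
  · have ht : ((t : G) : G ⧸ T) = 1 := (QuotientGroup.eq_one_iff _).mpr t.2
    ext x
    simp [hφ, ht, hbT, add_comm]
  · simpa [hφ] using hbL g

theorem IsAffineExtension.injective {E : TranslationRep T V} {φ : G →* (V ≃ᵃ[ℚ] V)}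
    (hφ : E.IsAffineExtension φ) (hE : Function.Injective E.toVector)
    (hrep : Function.Injective E.rep) : Function.Injective φ := by
  refine (injective_iff_map_eq_one φ).mpr fun g hg => ?_
  have hgT : g ∈ T := (QuotientGroup.eq_one_iff g).mp <| hrep <| by
    rw [← hφ.linear_eq, hg, map_one]
    rfl
  have hvec : E.toVector (.ofMul ⟨g, hgT⟩) = 0 := by
    simpa using DFunLike.congr_fun ((hφ.apply_coe ⟨g, hgT⟩).symm.trans hg) 0
  exact congrArg Subtype.val (hE (hvec.trans (map_zero _).symm))

theorem injective_rep (E : TranslationRep T V) (hE : Function.Injective E.toVector)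
    (hT : Subgroup.centralizer (T : Set G) ≤ T) : Function.Injective E.rep := by
  rw [injective_iff_map_eq_one]
  intro p hp
  obtain ⟨g, rfl⟩ := QuotientGroup.mk_surjective p
  refine (QuotientGroup.eq_one_iff _).mpr (hT (Subgroup.mem_centralizer_iff.mpr fun t ht => ?_))
  have hgt : MulAut.conjNormal g ⟨t, ht⟩ = ⟨t, ht⟩ :=
    Additive.ofMul.injective (hE (by rw [← E.rep_toVector, hp, Module.End.one_apply]))
  exact (mul_inv_eq_iff_eq_mul.mp (congrArg Subtype.val hgt)).symm

section Tensor

open scoped IsMulCommutative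

variable [IsMulCommutative T]

/-- The realization of a commutative `T` in `ℚ ⊗ T`. -/
noncomputable def tensor (T : Subgroup G) [T.Normal] [IsMulCommutative T] :
    TranslationRep T (ℚ ⊗[ℤ] Additive T) where
  toVector := (TensorProduct.mk ℤ ℚ (Additive T) 1).toAddMonoidHom
  rep := QuotientGroup.lift T
    ((Module.End.baseChangeHom ℤ ℚ (Additive T)).toMonoidHom.comp
      ((Representation.ofMulDistribMulAction (MulAut T) T).comp MulAut.conjNormal))
    fun g hg => by
      rw [MonoidHom.mem_ker, MonoidHom.comp_apply, MonoidHom.comp_apply,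
        conjNormal_eq_one_of_mem hg, map_one, map_one]
  rep_toVector _ _ := rfl

theorem injective_toVector_tensor [Module.Free ℤ (Additive T)] :
    Function.Injective (tensor T).toVector := fun s t hst => by
  let b := Module.Free.chooseBasis ℤ (Additive T)
  refine b.ext_elem fun i => ?_
  have h := congrArg (fun x => (b.baseChange ℚ).repr x i) hst
  simpa [tensor] using h

theorem isLattice_tensor [Module.Finite ℤ (Additive T)] : IsLattice ℚ (tensor T).lattice where
  fg := by
    have hfg := (Module.Finite.fg_top (R := ℤ) (M := Additive T)).map
      (tensor T).toVector.toIntLinearMap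
    rwa [← LinearMap.range_eq_map] at hfg
  span_eq_top := by
    have hrange : ((tensor T).lattice : Set (ℚ ⊗[ℤ] Additive T)) =
        (⊤ : Submodule ℤ (Additive T)).map (TensorProduct.mk ℤ ℚ _ 1) := Set.image_univ.symm
    rw [hrange]
    exact (baseChange_eq_span ℚ _).symm.trans (baseChange_top ℚ)

end Tensor

end TranslationRep

end TranslationRep

section Models

theorem subgroup_le_of_inter_subset {A : Type*} [Group A] {Λ H H' : Subgroup A} {F : Set A}
    (hH : Λ ≤ H) (hH' : Λ ≤ H') (hHF : (H : Set A) ⊆ Λ * F) (h : (H : Set A) ∩ F ⊆ H') :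
    H ≤ H' := by
  intro a ha
  obtain ⟨l, hl, f, hf, rfl⟩ := hHF ha
  exact H'.mul_mem (hH' hl) (h ⟨(H.mul_mem_cancel_left (hH hl)).mp ha, hf⟩)

theorem finite_setOf_subgroup_subset_mul {A : Type*} [Group A] (Λ : Subgroup A) {F : Set A}
    (hF : F.Finite) : {H : Subgroup A | Λ ≤ H ∧ (H : Set A) ⊆ Λ * F}.Finite := by
  refine Set.Finite.of_injOn (f := fun H : Subgroup A => (H : Set A) ∩ F)
    (fun _ _ => Set.inter_subset_right) (fun H hH H' hH' heq => le_antisymm ?_ ?_)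
    hF.finite_subsets
  · exact subgroup_le_of_inter_subset hH.1 hH'.1 hH.2 (heq.le.trans Set.inter_subset_left)
  · exact subgroup_le_of_inter_subset hH'.1 hH.1 hH'.2 (heq.ge.trans Set.inter_subset_left)

/-- The fractions of denominator `N` in `[-1, 1]`. -/
def boundedFractions (N : ℕ) : Set ℚ := {x | |x| ≤ 1 ∧ ∃ m : ℤ, N * x = m}

theorem finite_boundedFractions {N : ℕ} (hN : N ≠ 0) : (boundedFractions N).Finite := by
  have hN' : (0 : ℚ) < N := Nat.cast_pos.mpr (Nat.pos_of_ne_zero hN)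
  refine ((Set.finite_Icc (-N : ℤ) N).image fun m : ℤ => (m : ℚ) / N).subset ?_
  rintro x ⟨hx, m, hm⟩
  have hmN : |(m : ℚ)| ≤ N := by
    rw [← hm, abs_mul, Nat.abs_cast]
    exact mul_le_of_le_one_right hN'.le hx
  exact ⟨m, abs_le.mp (mod_cast hmN), (eq_div_of_mul_eq hN'.ne' ((mul_comm _ _).trans hm)).symm⟩

theorem fract_mem_boundedFractions {N : ℕ} {x : ℚ} (hx : ∃ m : ℤ, N * x = m) :
    Int.fract x ∈ boundedFractions N := by
  obtain ⟨m, hm⟩ := hx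
  refine ⟨(abs_of_nonneg (Int.fract_nonneg x)).trans_le (Int.fract_lt_one x).le,
    m - N * ⌊x⌋, ?_⟩
  rw [Int.fract, mul_sub, hm]
  push_cast
  rfl

variable (d : ℕ)

/-- The exponent of `L / span ℤ v` for a reduced basis `v` of a lattice `L` of rank `d` divides this
number. -/
def pointDenominator : ℕ := ((2 * d + 1) ^ d).factorial

/-- Finitely many matrices, among which are those of the point group in a reduced basis. -/
def pointMatrices : Set (Matrix (Fin d) (Fin d) ℚ) :=
  {A | ∀ i j, A i j ∈ boundedFractions (pointDenominator d)}

/-- A common denominator for the translation parts of a space group in a reduced basis: the order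
of its point group divides the factorial of the number of matrices available for it. -/
noncomputable def affineDenominator : ℕ := pointDenominator d * (pointMatrices d).ncard.factorial

/-- Finitely many affine maps representing the cosets of the integer translations in a space group
written in a reduced basis. -/
def boxAffine : Set ((Fin d → ℚ) ≃ᵃ[ℚ] (Fin d → ℚ)) :=
  {f | LinearMap.toMatrix' f.linear ∈ pointMatrices d ∧
    ∀ i, f 0 i ∈ boundedFractions (affineDenominator d)}

/-- The standard lattice `ℤ^d` in `ℚ^d`. -/
def integerLattice : Submodule ℤ (Fin d → ℚ) := span ℤ (Set.range (Pi.basisFun ℚ (Fin d)))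

/-- The translations by `ℤ^d`, as affine maps. -/
def integerTranslations : Subgroup ((Fin d → ℚ) ≃ᵃ[ℚ] (Fin d → ℚ)) :=
  (AddSubgroup.toSubgroup (integerLattice d).toAddSubgroup).map (AffineEquiv.constVAddHom ℚ _)

/-- The model space groups: every `d`-dimensional space group is isomorphic to one of these. -/
def models : Set (Subgroup ((Fin d → ℚ) ≃ᵃ[ℚ] (Fin d → ℚ))) :=
  {H | integerTranslations d ≤ H ∧
    (H : Set ((Fin d → ℚ) ≃ᵃ[ℚ] (Fin d → ℚ))) ⊆ (integerTranslations d : Set _) * boxAffine d}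

variable {d}

theorem mem_integerLattice {x : Fin d → ℚ} : x ∈ integerLattice d ↔ ∀ i, ∃ m : ℤ, x i = m := by
  simp [integerLattice, (Pi.basisFun ℚ (Fin d)).mem_span_iff_repr_mem ℤ, eq_comm]

theorem mem_integerTranslations {f : (Fin d → ℚ) ≃ᵃ[ℚ] (Fin d → ℚ)} :
    f ∈ integerTranslations d ↔ ∃ x ∈ integerLattice d, AffineEquiv.constVAdd ℚ _ x = f := Iff.rfl

variable (d)

theorem finite_pointMatrices : (pointMatrices d).Finite :=
  Set.Finite.pi' fun _ => Set.Finite.pi' fun _ =>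
    finite_boundedFractions (Nat.factorial_ne_zero _)

theorem finite_boxAffine : (boxAffine d).Finite := by
  have hD : affineDenominator d ≠ 0 :=
    mul_ne_zero (Nat.factorial_ne_zero _) (Nat.factorial_ne_zero _)
  refine Set.Finite.of_injOn (f := fun f => (LinearMap.toMatrix' f.linear.toLinearMap, f 0))
    (fun f hf => hf) (fun f _ g _ h => ?_) ((finite_pointMatrices d).prod
      (Set.Finite.pi' fun _ : Fin d => finite_boundedFractions hD))
  obtain ⟨hlinear, hzero⟩ := Prod.mk.inj h
  exact AffineEquiv.toAffineMap_injective
    (AffineMap.ext_linear (LinearMap.toMatrix'.injective hlinear) hzero)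

theorem finite_models : (models d).Finite :=
  finite_setOf_subgroup_subset_mul _ (finite_boxAffine d)

end Models

section Reduction

variable {G V : Type*} [Group G] {T : Subgroup G} [T.Normal] {d : ℕ} [AddCommGroup V] [Module ℚ V]

/-- A realization in coordinates adapted to the translation lattice `L`: the standard lattice has
bounded exponent in `L`, and the point group has matrix entries in `[-1, 1]`. -/
structure IsReduced (E : TranslationRep T (Fin d → ℚ)) : Prop where
  integerLattice_le : integerLattice d ≤ E.lattice
  smul_mem : ∀ x ∈ E.lattice, pointDenominator d • x ∈ integerLattice d
  abs_le_one : ∀ p i j, |E.rep p (Pi.single i 1) j| ≤ 1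

theorem TranslationRep.exists_isReduced_map [Finite (G ⧸ T)] (E : TranslationRep T V)
    [IsLattice ℚ E.lattice] (e : Module.Basis (Fin d) ℚ V) :
    ∃ c : V ≃ₗ[ℚ] (Fin d → ℚ), IsReduced (E.map c) := by
  obtain ⟨v, hvL, hLv, hv⟩ := exists_basis_abs_repr_le_one (fun p _ => E.rep_mem_lattice p) e
  rw [Fintype.card_fin] at hLv
  refine ⟨v.equivFun, ?_, ?_, fun p i j => ?_⟩
  · refine span_le.mpr (Set.range_subset_iff.mpr fun i => ?_)
    obtain ⟨t, ht⟩ := mem_lattice.mp (hvL i)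
    refine mem_lattice.mpr ⟨t, ?_⟩
    simp [TranslationRep.map, ht, Finsupp.single_eq_pi_single]
  · intro x hx
    obtain ⟨t, rfl⟩ := mem_lattice.mp hx
    have hspan := hLv _ (mem_lattice.mpr ⟨t, rfl⟩)
    rw [v.mem_span_iff_repr_mem ℤ] at hspan
    refine mem_integerLattice.mpr fun i => ?_
    obtain ⟨m, hm⟩ := hspan i
    exact ⟨m, by simpa [TranslationRep.map, pointDenominator] using hm.symm⟩
  · simpa [TranslationRep.map] using hv p i j

namespace IsReduced

variable {E : TranslationRep T (Fin d → ℚ)}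

theorem toMatrix_mem_pointMatrices (hE : IsReduced E) (p : G ⧸ T) :
    LinearMap.toMatrix' (E.rep p) ∈ pointMatrices d := by
  intro i j
  have hj : Pi.single j 1 ∈ integerLattice d :=
    subset_span ⟨j, Pi.basisFun_apply ℚ (Fin d) j⟩
  obtain ⟨m, hm⟩ := mem_integerLattice.mp
    (hE.smul_mem _ (E.rep_mem_lattice p (hE.integerLattice_le hj))) i
  rw [LinearMap.toMatrix'_apply]
  exact ⟨hE.abs_le_one p j i, m, by simpa using hm⟩

theorem natCard_dvd_factorial [Finite (G ⧸ T)] (hE : IsReduced E)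
    (hrep : Function.Injective E.rep) :
    Nat.card (G ⧸ T) ∣ (pointMatrices d).ncard.factorial := by
  have := (finite_pointMatrices d).to_subtype
  refine Nat.dvd_factorial Nat.card_pos (Nat.card_le_card_of_injective
    (fun p => (⟨_, hE.toMatrix_mem_pointMatrices p⟩ : pointMatrices d)) fun p q h => ?_)
  exact hrep (LinearMap.toMatrix'.injective (Subtype.mk.inj h))

theorem affineDenominator_mul_eq [Finite (G ⧸ T)] (hE : IsReduced E)
    (hrep : Function.Injective E.rep) {φ : G →* ((Fin d → ℚ) ≃ᵃ[ℚ] (Fin d → ℚ))}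
    (hφ : E.IsAffineExtension φ) (g : G) (i : Fin d) :
    ∃ m : ℤ, affineDenominator d * φ g 0 i = m := by
  obtain ⟨k, hk⟩ := hE.natCard_dvd_factorial hrep
  have hmem : affineDenominator d • φ g 0 ∈ integerLattice d := by
    rw [affineDenominator, hk, mul_smul]
    refine hE.smul_mem _ ?_
    rw [mul_comm, mul_smul]
    exact nsmul_mem (hφ.card_smul_mem g) k
  simpa using mem_integerLattice.mp hmem i

theorem range_mem_models [Finite (G ⧸ T)] (hE : IsReduced E) (hrep : Function.Injective E.rep)
    {φ : G →* ((Fin d → ℚ) ≃ᵃ[ℚ] (Fin d → ℚ))} (hφ : E.IsAffineExtension φ) :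
    φ.range ∈ models d := by
  refine ⟨fun f hf => ?_, ?_⟩
  · obtain ⟨x, hx, rfl⟩ := mem_integerTranslations.mp hf
    obtain ⟨t, rfl⟩ := TranslationRep.mem_lattice.mp (hE.integerLattice_le hx)
    exact ⟨t, hφ.apply_coe t⟩
  rintro _ ⟨g, rfl⟩
  let z : Fin d → ℚ := fun i => ⌊φ g 0 i⌋
  have hz : AffineEquiv.constVAdd ℚ _ z ∈ integerTranslations d :=
    mem_integerTranslations.mpr ⟨z, mem_integerLattice.mpr fun i => ⟨_, rfl⟩, rfl⟩
  refine ⟨_, hz, AffineEquiv.constVAdd ℚ _ (-z) * φ g, ⟨?_, fun i => ?_⟩, ?_⟩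
  · have hlinear : ((AffineEquiv.constVAdd ℚ _ (-z) * φ g).linear : (Fin d → ℚ) →ₗ[ℚ] _) =
        E.rep g := hφ.linear_eq g
    rw [hlinear]
    exact hE.toMatrix_mem_pointMatrices g
  · have hzero : (AffineEquiv.constVAdd ℚ (Fin d → ℚ) (-z) * φ g) 0 i = Int.fract (φ g 0 i) :=
      neg_add_eq_sub _ _
    rw [hzero]
    exact fract_mem_boundedFractions (hE.affineDenominator_mul_eq hrep hφ g i)
  · ext1 x
    simp [AffineEquiv.coe_mul]

end IsReduced

end Reduction

open scoped IsMulCommutative in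
theorem exists_mem_models {G : Type*} [Group G] (T : Subgroup G) [T.Normal] [Finite (G ⧸ T)] {d : ℕ}
    (e : T ≃* Multiplicative (Fin d → ℤ)) (hT : Subgroup.centralizer (T : Set G) = T) :
    ∃ H ∈ models d, Nonempty (G ≃* H) := by
  have : IsMulCommutative T := Subgroup.le_centralizer_iff_isMulCommutative.mp hT.ge
  let b : Module.Basis (Fin d) ℤ (Additive T) :=
    .ofEquivFun (MulEquiv.toAdditiveLeft e).toIntLinearEquiv
  have : Module.Free ℤ (Additive T) := .of_basis b
  have : Module.Finite ℤ (Additive T) := .of_basis b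
  have := TranslationRep.isLattice_tensor (T := T)
  obtain ⟨c, hE⟩ := (TranslationRep.tensor T).exists_isReduced_map (b.baseChange ℚ)
  have hinj : Function.Injective ((TranslationRep.tensor T).map c).toVector :=
    c.injective.comp TranslationRep.injective_toVector_tensor
  have hrep := TranslationRep.injective_rep _ hinj hT.le
  obtain ⟨φ, hφ⟩ := TranslationRep.exists_isAffineExtension ((TranslationRep.tensor T).map c)
  exact ⟨φ.range, hE.range_mem_models hrep hφ, ⟨MonoidHom.ofInjective (hφ.injective hinj hrep)⟩⟩

end Bieberbach

/-- **Bieberbach's finiteness theorem**: for every positive integer `d` there are,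
up to group isomorphism, only finitely many groups `G` possessing a normal
subgroup `T ≅ ℤ^d` of finite index which is its own centralizer (i.e. `d`-dimensional
space groups). -/
theorem bieberbach_finitely_many_space_groups (d : ℕ) (hd : 0 < d) :
    ∃ (k : ℕ) (H : Fin k → Type) (grp : ∀ i, Group (H i)),
      ∀ (G : Type) [Group G] (T : Subgroup G), T.Normal →
        Nonempty (T ≃* Multiplicative (Fin d → ℤ)) →
        Finite (G ⧸ T) →
        Subgroup.centralizer (T : Set G) = T →
        ∃ i, letI := grp i; Nonempty (G ≃* H i) := by
  have := (Bieberbach.finite_models d).to_subtype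
  obtain ⟨k, ⟨f⟩⟩ := Finite.exists_equiv_fin (Bieberbach.models d)
  refine ⟨k, fun i => (f.symm i).1, fun i => inferInstance, ?_⟩
  rintro G _ T hT ⟨e⟩ hfin hcentralizer
  obtain ⟨H, hH, ⟨φ⟩⟩ := Bieberbach.exists_mem_models T e hcentralizer
  have hi : (f.symm (f ⟨H, hH⟩)).1 = H := congrArg Subtype.val (f.symm_apply_apply _)
  exact ⟨f ⟨H, hH⟩, ⟨φ.trans (MulEquiv.subgroupCongr hi.symm)⟩⟩
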